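/- Fix 0 < ε < 1, let δ = ε^6/10^20 and N = 10^16/ε^4, and let p be a probability distribution on a countable alphabet Σ with p(σ) < δ for all σ ∈ Σ. For i ∈ ℕ let Σ_i = {σ ∈ Σ : δ/2^i < p(σ) ≤ δ/2^{i−1}}, let I = {i ∈ ℕ : |Σ_i| > N}, and let Σ_I = ∪_{i∈I} Σ_i; assume Σ_I is nonempty. Then there exists a coloring {g_σ}_{σ∈Σ_I} of ℕ such that for all σ ∈ Σ_I: (1) g_σ is well-distributed with d(g_σ) = p(σ)/(∑_{τ∈Σ_I} p(τ)), (2) QR_1(g_σ) ≤ 1 + 1000/N^{1/4} = 1 + ε/10, and (3) g_σ(n+1) − g_σ(n) ≥ N/4 for all n ∈ ℕ. -/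

import Mathlib

open scoped ENNReal

/-- The `k`-quasi-regularity of a strictly increasing `f : ℕ → ℕ`:
`QRk k f = ⨆_{q,r ≥ k, n,m} (q/r) · (f(n+r) − f(n)) / (f(m+q) − f(m))`. -/
noncomputable def QRk (k : ℕ) (f : ℕ → ℕ) : ℝ≥0∞ :=
  ⨆ (q : ℕ) (r : ℕ) (_ : k ≤ q) (_ : k ≤ r) (n : ℕ) (m : ℕ),
    ((q : ℝ≥0∞) / (r : ℝ≥0∞)) *
      (((f (n + r) - f n : ℕ) : ℝ≥0∞) / ((f (m + q) - f m : ℕ) : ℝ≥0∞))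

/-- The quasi-regularity of a strictly increasing `f : ℕ → ℕ`:
the supremum of ratios of consecutive gaps. -/
noncomputable def QRfun (f : ℕ → ℕ) : ℝ≥0∞ :=
  ⨆ (n : ℕ) (m : ℕ),
    ((f (n + 1) - f n : ℕ) : ℝ≥0∞) / ((f (m + 1) - f m : ℕ) : ℝ≥0∞)

/-- `f` is well-distributed with density `d`: `|f⁻¹({1,…,n})| / n → d`. -/
def HasDensityFun (f : ℕ → ℕ) (d : ℝ) : Prop :=
  Filter.Tendsto
    (fun n : ℕ => ({m : ℕ | 1 ≤ f m ∧ f m ≤ n}.ncard : ℝ) / (n : ℝ))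
    Filter.atTop (nhds d)

/-- A coloring of `ℕ` with color set `C`: a family of strictly increasing functions `ℕ → ℕ`
such that every natural number is hit exactly once by the whole family. -/
def IsColoring {C : Type*} (f : C → ℕ → ℕ) : Prop :=
  (∀ c, StrictMono (f c)) ∧ ∀ m : ℕ, ∃! ci : C × ℕ, f ci.1 ci.2 = m

/-!
The occurrences of each color are first prescribed in real time by a phase `ψ` of slope about its
density: the `j`-th occurrence is due when `ψ` reaches `j + 1`. Suppose that, up to a common factor,
the densities of `m` colors are `m + f i` with `0 ≤ f i` and `∑ f i = 1`. Let all phases run at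
speed `m` with offsets `i / m`, and in each unit of time let one of them run at speed `m + 1`, the
`i`-th one with frequency `f i`. By Hermite's identity `∑ ⌊x + i / m⌋ = ⌊m x⌋`, the number of
occurrences of this group due by time `t` is linear in `t` up to an error of `2`. A dyadic bucket of
`k > R ^ 4` colors splits into groups of about `R` colors with nearly equal densities, up to a
negligible remainder, so its total error is `O(k / R)`.

The colors of a bucket of total density `W` have densities about `W / k`, so this error amounts to a
time shift of `O(k / (R W))`, a fraction `O(1 / R)` of the gaps between occurrences. Processing the
occurrences as unit jobs by earliest deadline first moves each of them by at most such a shift while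
every natural number receives exactly one occurrence.
-/

section EarliestDeadlineFirst

open Finset

variable {J : Type*}

theorem exists_seq_of_history {P : (n : ℕ) → (Fin n → J) → J → Prop}
    (h : ∀ n hist, ∃ x, P n hist x) : ∃ e : ℕ → J, ∀ n, P n (fun k ↦ e k) (e n) := by
  choose next hnext using h
  let e : ℕ → J := wellFounded_lt.fix fun n prev ↦ next n fun k ↦ prev k k.2
  have he (n : ℕ) : e n = next n fun k ↦ e k := wellFounded_lt.fix_eq _ n
  exact ⟨e, fun n ↦ he n ▸ hnext n _⟩

/-- The earliest-deadline-first policy for unit jobs: the job `e n` processed at time `n` has the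
smallest deadline among the jobs that are released by time `n` and have not been processed yet. -/
def IsEDFSchedule (release deadline : J → ℕ) (e : ℕ → J) : Prop :=
  ∀ n, MinimalFor (fun j ↦ j ∉ e '' Set.Iio n ∧ release j ≤ n) deadline (e n)

variable {release deadline : J → ℕ} {e : ℕ → J}

theorem exists_isEDFSchedule
    (hsupply : ∀ n : ℕ, ∃ F : Finset J, n < #F ∧ ∀ j ∈ F, release j ≤ n) :
    ∃ e, IsEDFSchedule release deadline e := by
  classical
  have hnext (n : ℕ) (hist : Fin n → J) :
      ∃ x, MinimalFor (fun j ↦ j ∉ Set.range hist ∧ release j ≤ n) deadline x := by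
    obtain ⟨F, hF, hrel⟩ := hsupply n
    have hcard : #(univ.image hist) < #F := card_image_le.trans_lt (by simpa using hF)
    obtain ⟨j, hj, hnew⟩ := exists_mem_notMem_of_card_lt_card hcard
    exact exists_minimalFor_of_wellFoundedLT _ _ ⟨j, by simpa using hnew, hrel j hj⟩
  obtain ⟨e, he⟩ := exists_seq_of_history hnext
  refine ⟨e, fun n ↦ ?_⟩
  convert he n using 4
  simp [Fin.exists_iff]

namespace IsEDFSchedule

theorem injective (he : IsEDFSchedule release deadline e) : Function.Injective e :=
  .of_lt_imp_ne fun k n hkn heq ↦ (he n).prop.1 ⟨k, hkn, heq⟩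

theorem exists_busy_interval (he : IsEDFSchedule release deadline e) (t : ℕ) :
    ∃ s ≤ t + 1, (∀ n ∈ Ico s (t + 1), deadline (e n) ≤ t) ∧
      ∀ j ∉ e '' Set.Iio s, deadline j ≤ t → s ≤ release j := by
  classical
  have hex : ∃ s, s ≤ t + 1 ∧ ∀ n ∈ Ico s (t + 1), deadline (e n) ≤ t := ⟨t + 1, by simp⟩
  obtain ⟨hs, hbusy⟩ := Nat.find_spec hex
  refine ⟨Nat.find hex, hs, hbusy, fun j hj hjt ↦ ?_⟩
  by_contra! hlt
  obtain ⟨u, hu⟩ := Nat.exists_eq_succ_of_ne_zero (Nat.ne_zero_of_lt hlt)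
  rw [hu] at hs hbusy hj hlt
  -- The slot before the busy interval was given to a later deadline, so `j` was not yet released.
  have hlate : t < deadline (e u) := by
    by_contra! hle
    refine Nat.find_min hex (hu ▸ u.lt_succ_self) ⟨by omega, fun n hn ↦ ?_⟩
    obtain rfl | hne := eq_or_ne n u
    · exact hle
    · exact hbusy n (by grind)
  refine (he u).not_lt ⟨fun hmem ↦ hj ?_, Nat.lt_succ_iff.mp hlt⟩ (hjt.trans_lt hlate)
  exact Set.image_mono (Set.Iio_subset_Iio u.le_succ) hmem

theorem exists_le_deadline (he : IsEDFSchedule release deadline e)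
    (hdemand : ∀ s t, ∀ F : Finset J, (∀ j ∈ F, s ≤ release j ∧ deadline j < t) → #F ≤ t - s)
    (j : J) : ∃ k ≤ deadline j, e k = j := by
  classical
  by_contra! hlate
  have hnew : ∀ s ≤ deadline j + 1, j ∉ e '' Set.Iio s := by
    rintro s hs ⟨k, hk, rfl⟩
    exact hlate k (by grind) rfl
  obtain ⟨s, hs, hbusy, hrel⟩ := he.exists_busy_interval (deadline j)
  have hcard := hdemand s (deadline j + 1) (insert j ((Ico s (deadline j + 1)).image e)) <| by
    simp only [forall_mem_insert, forall_mem_image, Nat.lt_succ_iff]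
    refine ⟨⟨hrel j (hnew s hs) le_rfl, le_rfl⟩, fun n hn ↦ ⟨hrel _ ?_ (hbusy n hn), hbusy n hn⟩⟩
    rw [he.injective.mem_set_image, Set.mem_Iio]
    exact (mem_Ico.mp hn).1.not_gt
  rw [card_insert_of_notMem fun hj ↦ hnew _ le_rfl ?_, card_image_of_injective _ he.injective,
    Nat.card_Ico] at hcard
  · omega
  · obtain ⟨n, hn, hnj⟩ := mem_image.mp hj
    exact ⟨n, (mem_Ico.mp hn).2, hnj⟩

end IsEDFSchedule

theorem exists_bijective_schedule
    (hdemand : ∀ s t, ∀ F : Finset J, (∀ j ∈ F, s ≤ release j ∧ deadline j < t) → #F ≤ t - s)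
    (hsupply : ∀ n : ℕ, ∃ F : Finset J, n < #F ∧ ∀ j ∈ F, release j ≤ n) :
    ∃ T : J → ℕ, T.Bijective ∧ ∀ j, release j ≤ T j ∧ T j ≤ deadline j := by
  obtain ⟨e, he⟩ := exists_isEDFSchedule (deadline := deadline) hsupply
  choose T hT heT using he.exists_le_deadline hdemand
  have hTe : Function.LeftInverse T e := fun n ↦ he.injective (heT (e n))
  refine ⟨T, ⟨Function.LeftInverse.injective heT, hTe.surjective⟩, fun j ↦ ⟨?_, hT j⟩⟩
  simpa only [heT] using (he (T j)).prop.2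

end EarliestDeadlineFirst

section FluidJobs

open Finset

variable {J ι : Type*}

/-- A system of unit jobs arriving almost like a fluid: job `x` belongs to class `β x` and has ideal
time `τ x`, the finite set `N i t` collects the jobs of class `i` with ideal time at most `t`, and
its cardinality follows a fluid of rate `W i` that is shifted in time by at most `c i`. -/
structure IsNearlyFluid (β : J → ι) (τ : J → ℝ) (W c : ι → ℝ) (N : ι → ℝ → Finset J) : Prop where
  time_nonneg : ∀ x, 0 ≤ τ x
  shift_nonneg : ∀ i, 0 ≤ c i
  rate_nonneg : ∀ i, 0 ≤ W i
  hasSum_rate : HasSum W 1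
  mem_iff : ∀ {i t x}, x ∈ N i t ↔ β x = i ∧ τ x ≤ t
  abs_card_sub_le : ∀ i {t}, 0 ≤ t → |(#(N i t) : ℝ) - W i * t| ≤ W i * c i

namespace IsNearlyFluid

variable {β : J → ι} {τ : J → ℝ} {W c : ι → ℝ} {N : ι → ℝ → Finset J}

theorem card_le_of_window (h : IsNearlyFluid β τ W c N) {i : ι} {s t : ℕ} {F : Finset J}
    (hF : F.Nonempty) (hβ : ∀ x ∈ F, β x = i)
    (hwindow : ∀ x ∈ F, (s ≠ 0 → s + c i < τ x) ∧ τ x ≤ t - c i) :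
    (#F : ℝ) ≤ W i * (t - s) := by
  classical
  obtain ⟨y, hy⟩ := hF
  have ht : (0 : ℝ) ≤ t - c i := (h.time_nonneg y).trans (hwindow y hy).2
  have hupper := (abs_le.mp (h.abs_card_sub_le i ht)).2
  have hsub : F ⊆ N i (t - c i) := fun x hx ↦ h.mem_iff.mpr ⟨hβ x hx, (hwindow x hx).2⟩
  obtain rfl | hs := eq_or_ne s 0
  · have hcard : (#F : ℝ) ≤ #(N i (t - c i)) := mod_cast card_le_card hsub
    push_cast
    linarith
  · have hs0 : (0 : ℝ) ≤ s + c i := add_nonneg s.cast_nonneg (h.shift_nonneg i)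
    have hlower := (abs_le.mp (h.abs_card_sub_le i hs0)).1
    have hnest : N i (s + c i) ⊆ N i (t - c i) := fun x hx ↦ by
      have hxs := h.mem_iff.mp hx
      exact h.mem_iff.mpr ⟨hxs.1, by linarith [(hwindow y hy).1 hs, (hwindow y hy).2, hxs.2]⟩
    have hsdiff : F ⊆ N i (t - c i) \ N i (s + c i) := fun x hx ↦
      mem_sdiff.mpr ⟨hsub hx, fun hxs ↦ ((hwindow x hx).1 hs).not_ge (h.mem_iff.mp hxs).2⟩
    have hcard : (#F : ℝ) ≤ #(N i (t - c i)) - #(N i (s + c i)) := by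
      rw [← Nat.cast_sub (card_le_card hnest), ← card_sdiff_of_subset hnest]
      exact mod_cast card_le_card hsdiff
    linarith

theorem card_le_sub (h : IsNearlyFluid β τ W c N) {s t : ℕ} {F : Finset J}
    (hwindow : ∀ x ∈ F, (s ≠ 0 → s + c (β x) < τ x) ∧ τ x ≤ t - c (β x)) : #F ≤ t - s := by
  classical
  have hfiber : ∀ i ∈ F.image β, (#{x ∈ F | β x = i} : ℝ) ≤ W i * (t - s) := fun i hi ↦ by
    refine h.card_le_of_window (fiber_nonempty_iff_mem_image.mpr hi) (by simp) fun x hx ↦ ?_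
    obtain ⟨hxF, rfl⟩ := mem_filter.mp hx
    exact hwindow x hxF
  have hcard : (#F : ℝ) ≤ (∑ i ∈ F.image β, W i) * (t - s) := by
    rw [card_eq_sum_card_image β F, sum_mul]
    exact mod_cast sum_le_sum hfiber
  have hnonneg : 0 ≤ ∑ i ∈ F.image β, W i := sum_nonneg fun i _ ↦ h.rate_nonneg i
  have hle_one : ∑ i ∈ F.image β, W i ≤ 1 :=
    sum_le_hasSum _ (fun i _ ↦ h.rate_nonneg i) h.hasSum_rate
  rw [← Nat.cast_le (α := ℝ)]
  obtain hst | hts := le_total s t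
  · have hst' : (s : ℝ) ≤ t := mod_cast hst
    rw [Nat.cast_sub hst]
    exact hcard.trans (mul_le_of_le_one_left (sub_nonneg.mpr hst') hle_one)
  · have hts' : (t : ℝ) ≤ s := mod_cast hts
    exact hcard.trans <|
      (mul_nonpos_of_nonneg_of_nonpos hnonneg (sub_nonpos.mpr hts')).trans (Nat.cast_nonneg _)

theorem exists_lt_card (h : IsNearlyFluid β τ W c N) (n : ℕ) :
    ∃ F : Finset J, n < #F ∧ ∀ x ∈ F, τ x ≤ n + 1 + c (β x) := by
  classical
  have hn : (n / (n + 1) : ℝ) < 1 := (div_lt_one n.cast_add_one_pos).mpr (lt_add_one _)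
  obtain ⟨I, hI⟩ := (h.hasSum_rate.eventually_const_lt hn).exists
  rw [div_lt_iff₀ n.cast_add_one_pos] at hI
  refine ⟨I.biUnion fun i ↦ N i (n + 1 + c i), ?_, fun x hx ↦ ?_⟩
  · have hdisj : (I : Set ι).PairwiseDisjoint fun i ↦ N i (n + 1 + c i) :=
      fun i _ k _ hik ↦ disjoint_left.mpr fun x hxi hxk ↦
        hik ((h.mem_iff.mp hxi).1.symm.trans (h.mem_iff.mp hxk).1)
    have hclass (i : ι) : W i * (n + 1) ≤ #(N i (n + 1 + c i)) := by
      have ht : (0 : ℝ) ≤ n + 1 + c i := add_nonneg n.cast_add_one_pos.le (h.shift_nonneg i)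
      linarith [(abs_le.mp (h.abs_card_sub_le i ht)).1]
    rw [card_biUnion hdisj, ← Nat.cast_lt (α := ℝ), Nat.cast_sum]
    exact (hI.trans_eq (sum_mul ..)).trans_le (sum_le_sum fun i _ ↦ hclass i)
  · obtain ⟨i, -, hxi⟩ := mem_biUnion.mp hx
    obtain ⟨rfl, hτ⟩ := h.mem_iff.mp hxi
    exact hτ

theorem exists_bijective_near (h : IsNearlyFluid β τ W c N) :
    ∃ T : J → ℕ, T.Bijective ∧ ∀ x, τ x - c (β x) - 1 ≤ T x ∧ T x ≤ τ x + c (β x) := by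
  let release (x : J) : ℕ := ⌈τ x - c (β x)⌉₊ - 1
  let deadline (x : J) : ℕ := ⌊τ x + c (β x)⌋₊
  have hdemand (s t : ℕ) (F : Finset J) (hF : ∀ x ∈ F, s ≤ release x ∧ deadline x < t) :
      #F ≤ t - s := by
    refine h.card_le_sub fun x hx ↦ ⟨fun hs ↦ ?_, ?_⟩
    · have hrelease : s ≤ ⌈τ x - c (β x)⌉₊ - 1 := (hF x hx).1
      have hlt : s < ⌈τ x - c (β x)⌉₊ := by omega
      linarith [Nat.lt_ceil.mp hlt]
    · linarith [Nat.lt_of_floor_lt (hF x hx).2]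
  have hsupply (n : ℕ) : ∃ F : Finset J, n < #F ∧ ∀ x ∈ F, release x ≤ n := by
    obtain ⟨F, hcard, hF⟩ := h.exists_lt_card n
    refine ⟨F, hcard, fun x hx ↦ Nat.sub_le_iff_le_add.mpr (Nat.ceil_le.mpr ?_)⟩
    push_cast
    linarith [hF x hx]
  obtain ⟨T, hT, hwindow⟩ := exists_bijective_schedule hdemand hsupply
  refine ⟨T, hT, fun x ↦ ⟨?_, ?_⟩⟩
  · have hceil : (⌈τ x - c (β x)⌉₊ : ℝ) ≤ T x + 1 := mod_cast Nat.sub_le_iff_le_add.mp (hwindow x).1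
    linarith [Nat.le_ceil (τ x - c (β x))]
  · have hfloor := Nat.floor_le (add_nonneg (h.time_nonneg x) (h.shift_nonneg (β x)))
    exact le_trans (mod_cast (hwindow x).2) hfloor

end IsNearlyFluid

end FluidJobs

section Occupation

/-- The time spent in `P` up to time `u`, when the process is in `P` throughout `[n, n + 1)` exactly
if `P n` holds; this interpolates `Nat.count P` linearly. -/
noncomputable def occupation (P : ℕ → Prop) [DecidablePred P] (u : ℝ) : ℝ :=
  Nat.count P ⌊u⌋₊ + if P ⌊u⌋₊ then u - ⌊u⌋₊ else 0

variable (P : ℕ → Prop) [DecidablePred P]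

theorem occupation_zero : occupation P 0 = 0 := by simp [occupation]

theorem occupation_add_occupation_not (u : ℝ) :
    occupation P u + occupation (fun n ↦ ¬P n) u = u := by
  have hcount : (Nat.count P ⌊u⌋₊ + Nat.count (fun n ↦ ¬P n) ⌊u⌋₊ : ℝ) = ⌊u⌋₊ := by
    simp only [Nat.count_eq_card_filter_range]
    exact_mod_cast (Finset.card_filter_add_card_filter_not ..).trans (Finset.card_range _)
  unfold occupation
  split_ifs <;> grind

theorem monotone_occupation : Monotone (occupation P) := by
  intro u v huv
  obtain hfloor | hfloor := (Nat.floor_mono huv).eq_or_lt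
  · unfold occupation
    rw [hfloor]
    split_ifs <;> linarith
  · have hu : occupation P u ≤ Nat.count P (⌊u⌋₊ + 1) := by
      rw [occupation, Nat.count_succ]
      split_ifs <;> push_cast <;> linarith [Nat.lt_floor_add_one u]
    have hv : (Nat.count P ⌊v⌋₊ : ℝ) ≤ occupation P v := by
      have := Nat.floor_le (Nat.pos_of_floor_pos (Nat.zero_lt_of_lt hfloor)).le
      unfold occupation
      split_ifs <;> linarith
    have hcount : (Nat.count P (⌊u⌋₊ + 1) : ℝ) ≤ Nat.count P ⌊v⌋₊ :=
      mod_cast Nat.count_monotone P hfloor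
    exact hu.trans (hcount.trans hv)

theorem occupation_sub_le {u v : ℝ} (huv : u ≤ v) : occupation P v - occupation P u ≤ v - u := by
  linarith [occupation_add_occupation_not P u, occupation_add_occupation_not P v,
    monotone_occupation (fun n ↦ ¬P n) huv]

theorem abs_occupation_sub_le {f B u : ℝ} (hf₀ : 0 ≤ f) (hf₁ : f ≤ 1)
    (hB : ∀ n : ℕ, |Nat.count P n - n * f| ≤ B) (hu : 0 ≤ u) :
    |occupation P u - f * u| ≤ B + 1 := by
  have hx₀ : 0 ≤ u - ⌊u⌋₊ := sub_nonneg.mpr (Nat.floor_le hu)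
  have hx₁ : u - ⌊u⌋₊ ≤ 1 := by linarith [Nat.lt_floor_add_one u]
  have hlast : |(if P ⌊u⌋₊ then u - ⌊u⌋₊ else 0) - f * (u - ⌊u⌋₊)| ≤ 1 := by
    rw [abs_le]
    split_ifs <;> constructor <;> nlinarith
  calc |occupation P u - f * u|
      = |(Nat.count P ⌊u⌋₊ - ⌊u⌋₊ * f)
          + ((if P ⌊u⌋₊ then u - ⌊u⌋₊ else 0) - f * (u - ⌊u⌋₊))| := by
        rw [occupation]; ring_nf
    _ ≤ B + 1 := (abs_add_le _ _).trans (add_le_add (hB _) hlast)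

end Occupation

section PrescribedFrequencies

open Finset

variable {ι : Type*}

theorem exists_greedy_seq [Finite ι] [Nonempty ι] [DecidableEq ι] (f : ι → ℝ) : ∃ a : ℕ → ι, ∀ n j,
    (n + 1) * f j - Nat.count (a · = j) n ≤ (n + 1) * f (a n) - Nat.count (a · = a n) n := by
  obtain ⟨a, ha⟩ := exists_seq_of_history
    (P := fun n hist i ↦ ∀ j, (n + 1) * f j - #{k | hist k = j} ≤ (n + 1) * f i - #{k | hist k = i})
    fun n hist ↦ Finite.exists_max _
  have hcount (n : ℕ) (j : ι) : #{k : Fin n | a k = j} = Nat.count (a · = j) n := by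
    rw [card_filter, Fin.sum_univ_eq_sum_range (fun k ↦ if a k = j then 1 else 0), ← card_filter,
      Nat.count_eq_card_filter_range]
  exact ⟨a, fun n j ↦ by simpa only [hcount] using ha n j⟩

theorem abs_sub_le_card_of_le [Fintype ι] {x y : ι → ℝ} (hsum : ∑ i, x i = ∑ i, y i)
    (hle : ∀ i, x i ≤ y i + 1) (i : ι) : |x i - y i| ≤ Fintype.card ι := by
  have hcard : (1 : ℝ) ≤ Fintype.card ι := mod_cast Fintype.card_pos_iff.mpr ⟨i⟩
  have hi : y i + 1 - x i ≤ ∑ j, (y j + 1 - x j) :=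
    single_le_sum (f := fun j ↦ y j + 1 - x j) (fun j _ ↦ sub_nonneg.mpr (hle j)) (mem_univ i)
  rw [sum_sub_distrib, sum_add_distrib, hsum, sum_const, card_univ, nsmul_one] at hi
  rw [abs_le]
  constructor <;> linarith [hle i]

variable [Fintype ι] [DecidableEq ι] {f : ι → ℝ} {a : ℕ → ι}

theorem sum_count_eq (a : ℕ → ι) (n : ℕ) : ∑ i, Nat.count (a · = i) n = n := by
  induction n with
  | zero => simp
  | succ n ih => simp [Nat.count_succ, sum_add_distrib, ih]

theorem sum_mul_sub_count_eq (hsum : ∑ i, f i = 1) (a : ℕ → ι) (x : ℝ) (n : ℕ) :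
    ∑ i, (x * f i - Nat.count (a · = i) n) = x - n := by
  have hcount : ∑ i, (Nat.count (a · = i) n : ℝ) = n := mod_cast sum_count_eq a n
  rw [sum_sub_distrib, ← mul_sum, hsum, hcount, mul_one]

theorem count_le_of_greedy (hf : ∀ i, 0 ≤ f i) (hsum : ∑ i, f i = 1)
    (ha : ∀ n j, (n + 1) * f j - Nat.count (a · = j) n
      ≤ (n + 1) * f (a n) - Nat.count (a · = a n) n) (n : ℕ) (i : ι) :
    Nat.count (a · = i) n ≤ n * f i + 1 := by
  induction n with
  | zero => simp
  | succ n ih =>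
    rw [Nat.count_succ]
    split_ifs with hi
    · -- The deficits have sum one, so the largest one is nonnegative.
      have hmax : 0 ≤ (n + 1) * f i - Nat.count (a · = i) n := by
        by_contra! hneg
        have hnonpos : ∑ j, ((n + 1) * f j - Nat.count (a · = j) n) ≤ 0 :=
          sum_nonpos fun j _ ↦ ((ha n j).trans_eq (by rw [hi])).trans hneg.le
        linarith [sum_mul_sub_count_eq hsum a (n + 1) n]
      push_cast
      linarith
    · push_cast
      linarith [hf i]

theorem exists_seq_count_close (hf : ∀ i, 0 ≤ f i) (hsum : ∑ i, f i = 1) :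
    ∃ a : ℕ → ι, ∀ n i, |Nat.count (a · = i) n - n * f i| ≤ Fintype.card ι := by
  have : Nonempty ι := by
    by_contra! hempty
    simp at hsum
  obtain ⟨a, ha⟩ := exists_greedy_seq f
  refine ⟨a, fun n ↦ abs_sub_le_card_of_le ?_ (count_le_of_greedy hf hsum ha n)⟩
  linarith [sum_mul_sub_count_eq hsum a n n,
    sum_sub_distrib (s := univ) (fun i ↦ n * f i) fun i ↦ (Nat.count (a · = i) n : ℝ)]

end PrescribedFrequencies

section Phases

open Finset

/-- A phase of frequency `d` and relative slope error `κ`: a clock `ψ` that prescribes the `j`-th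
occurrence of a color (counted from `j = 0`) at the time at which `ψ` takes the value `j + 1`. -/
structure IsPhase (κ d : ℝ) (ψ : ℝ → ℝ) : Prop where
  map_zero_le_one : ψ 0 ≤ 1
  le_sub : ∀ {s t}, s ≤ t → d * (1 - κ) * (t - s) ≤ ψ t - ψ s
  sub_le : ∀ {s t}, s ≤ t → ψ t - ψ s ≤ d * (1 + κ) * (t - s)
  exists_abs_sub_le : ∃ B, ∀ t, 0 ≤ t → |ψ t - d * t| ≤ B

namespace IsPhase

variable {κ κ' d t τ : ℝ} {ψ : ℝ → ℝ} {j : ℕ}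

theorem mono (h : IsPhase κ d ψ) (hd : 0 ≤ d) (hκ : κ ≤ κ') : IsPhase κ' d ψ where
  map_zero_le_one := h.map_zero_le_one
  le_sub hst := le_trans (by have := sub_nonneg.mpr hst; gcongr) (h.le_sub hst)
  sub_le hst := (h.sub_le hst).trans (by have := sub_nonneg.mpr hst; gcongr)
  exists_abs_sub_le := h.exists_abs_sub_le

theorem linear (hκ : 0 ≤ κ) (hd : 0 ≤ d) : IsPhase κ d fun t ↦ d * t where
  map_zero_le_one := by simp
  le_sub hst := by nlinarith [mul_nonneg (mul_nonneg hd hκ) (sub_nonneg.mpr hst)]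
  sub_le hst := by nlinarith [mul_nonneg (mul_nonneg hd hκ) (sub_nonneg.mpr hst)]
  exists_abs_sub_le := ⟨0, by simp⟩

theorem strictMono (h : IsPhase κ d ψ) (hd : 0 < d) (hκ : κ < 1) : StrictMono ψ := fun s t hst ↦ by
  have hslope : 0 < d * (1 - κ) * (t - s) :=
    mul_pos (mul_pos hd (sub_pos.mpr hκ)) (sub_pos.mpr hst)
  linarith [h.le_sub hst.le]

theorem continuous (h : IsPhase κ d ψ) (hd : 0 < d) (hκ : κ < 1) : Continuous ψ := by
  refine (LipschitzWith.of_le_add_mul' (d * (1 + κ)) fun s t ↦ ?_).continuous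
  obtain hst | hts := le_total s t
  · have hslope : 0 ≤ d * (1 + κ) := by
      linarith [h.sub_le zero_le_one, (h.strictMono hd hκ).monotone zero_le_one]
    exact ((h.strictMono hd hκ).monotone hst).trans
      (le_add_of_nonneg_right (mul_nonneg hslope dist_nonneg))
  · rw [Real.dist_eq, abs_of_nonneg (sub_nonneg.mpr hts)]
    linarith [h.sub_le hts]

theorem exists_eq (h : IsPhase κ d ψ) (hd : 0 < d) (hκ : κ < 1) (j : ℕ) :
    ∃ τ, 0 ≤ τ ∧ ψ τ = j + 1 := by
  have hslope : 0 < d * (1 - κ) := mul_pos hd (sub_pos.mpr hκ)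
  have hzero : ψ 0 ≤ j + 1 := h.map_zero_le_one.trans (by simp)
  set u := (j + 1 - ψ 0) / (d * (1 - κ)) with hu
  have hu₀ : 0 ≤ u := div_nonneg (sub_nonneg.mpr hzero) hslope.le
  have hmap_u : j + 1 ≤ ψ u := by
    have := h.le_sub hu₀
    rw [sub_zero, hu, mul_div_cancel₀ _ hslope.ne'] at this
    linarith
  obtain ⟨τ, hτ, hτj⟩ :=
    intermediate_value_Icc hu₀ (h.continuous hd hκ).continuousOn ⟨hzero, hmap_u⟩
  exact ⟨τ, hτ.1, hτj⟩

theorem lt_floor_iff (h : IsPhase κ d ψ) (hd : 0 < d) (hκ : κ < 1) (hτ : ψ τ = j + 1) :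
    j < ⌊ψ t⌋₊ ↔ τ ≤ t := by
  rw [← (h.strictMono hd hκ).le_iff_le, hτ, ← Nat.succ_le_iff, Nat.le_floor_iff' j.succ_ne_zero,
    Nat.cast_succ]

end IsPhase

theorem sum_add_div_eq {m : ℕ} (hm : 0 < m) (q : ℕ) : ∑ i ∈ range m, (q + i) / m = q := by
  induction q with
  | zero => exact sum_eq_zero fun i hi ↦ Nat.div_eq_of_lt (by simpa using hi)
  | succ q ih =>
    have hshift : ∑ i ∈ range m, (q + 1 + i) / m = ∑ i ∈ range m, (q + (i + 1)) / m :=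
      sum_congr rfl fun i _ ↦ by rw [add_assoc, add_comm 1]
    have hlast : (q + m) / m = q / m + 1 := Nat.add_div_right q hm
    have hfirst := sum_range_succ' (fun i ↦ (q + i) / m) m
    rw [sum_range_succ, ih, hlast, add_zero] at hfirst
    omega

theorem sum_floor_add_div {m : ℕ} (hm : 0 < m) {y : ℝ} (hy : 0 ≤ y) :
    ∑ i : Fin m, ⌊y + i / m⌋₊ = ⌊m * y⌋₊ := by
  rw [Fin.sum_univ_eq_sum_range (fun i ↦ ⌊y + i / m⌋₊), ← sum_add_div_eq hm ⌊m * y⌋₊]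
  refine sum_congr rfl fun i _ ↦ ?_
  have hdiv : y + i / m = (m * y + i) / m := by field_simp
  rw [hdiv, Nat.floor_div_natCast, Nat.floor_add_natCast (by positivity)]

theorem abs_sum_floor_sub_le_one {m : ℕ} (K : Fin m → ℕ) (a : Fin m) {x y : ℝ} (hx₀ : 0 ≤ x)
    (hx₁ : x ≤ 1) (hy : 0 ≤ y) :
    |∑ i, (⌊K i + (y + i / m) + if a = i then x else 0⌋₊ : ℝ) - (∑ i, (K i : ℝ) + m * y)| ≤ 1 := by
  have hlower (i : Fin m) :
      K i + ⌊y + i / m⌋₊ ≤ ⌊K i + (y + i / m) + if a = i then x else 0⌋₊ := by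
    rw [add_comm, ← Nat.floor_add_natCast (by positivity)]
    refine Nat.floor_mono ?_
    split_ifs <;> linarith
  have hupper (i : Fin m) : ⌊K i + (y + i / m) + if a = i then x else 0⌋₊
      ≤ K i + ⌊y + i / m⌋₊ + if a = i then 1 else 0 := by
    rw [add_comm (K i), ← Nat.floor_add_natCast (by positivity),
      ← Nat.floor_add_natCast (by positivity)]
    refine Nat.floor_mono ?_
    split_ifs <;> push_cast <;> linarith
  have hsum_lower := sum_le_sum fun i (_ : i ∈ univ) ↦ hlower i
  have hsum_upper := sum_le_sum fun i (_ : i ∈ univ) ↦ hupper i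
  rw [sum_add_distrib, sum_floor_add_div a.pos hy, ← Nat.cast_le (α := ℝ)] at hsum_lower
  rw [sum_add_distrib, sum_add_distrib, sum_floor_add_div a.pos hy, sum_ite_eq, if_pos (mem_univ a),
    ← Nat.cast_le (α := ℝ)] at hsum_upper
  push_cast at hsum_lower hsum_upper
  have hmy : (0 : ℝ) ≤ m * y := by positivity
  rw [abs_le]
  constructor <;> linarith [Nat.floor_le hmy, Nat.lt_floor_add_one ((m : ℝ) * y)]

/-- The phase of the `i`-th member of a group of `m` colors. It has speed `m`, and speed `m + 1`
during the time units `n` with `a n = i`. The offsets `i / m` are staggered so that the floors of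
the phases sum up to an almost linear function. -/
noncomputable def groupPhase {m : ℕ} (a : ℕ → Fin m) (i : Fin m) (u : ℝ) : ℝ :=
  m * u + occupation (a · = i) u + i / m

theorem abs_sum_floor_groupPhase_sub_le {m : ℕ} (a : ℕ → Fin m) {u : ℝ} (hu : 0 ≤ u) :
    |∑ i, (⌊groupPhase a i u⌋₊ : ℝ) - (m ^ 2 + 1) * u| ≤ 2 := by
  set n := ⌊u⌋₊
  have hn : (n : ℝ) ≤ u := Nat.floor_le hu
  have hn' : u < n + 1 := Nat.lt_floor_add_one u
  have hsplit (i : Fin m) : groupPhase a i u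
      = (m * n + Nat.count (a · = i) n : ℕ) + (m * (u - n) + i / m)
        + if a n = i then u - n else 0 := by
    rw [groupPhase, occupation]
    push_cast
    ring
  have hcount : (∑ i, (Nat.count (a · = i) n : ℝ)) = n := mod_cast sum_count_eq a n
  have hfloor := abs_sum_floor_sub_le_one (fun i ↦ m * n + Nat.count (a · = i) n) (a n)
    (sub_nonneg.mpr hn) (by linarith) (mul_nonneg m.cast_nonneg (sub_nonneg.mpr hn))
  simp only [← hsplit] at hfloor
  push_cast at hfloor
  rw [sum_add_distrib, hcount, sum_const, card_univ, Fintype.card_fin, nsmul_eq_mul] at hfloor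
  rw [abs_le] at hfloor ⊢
  constructor <;> linarith

theorem isPhase_groupPhase {m : ℕ} {a : ℕ → Fin m} {i : Fin m} {f B r : ℝ} (hf₀ : 0 ≤ f)
    (hf₁ : f ≤ 1) (ha : ∀ n : ℕ, |Nat.count (a · = i) n - n * f| ≤ B) (hr : 0 ≤ r) :
    IsPhase (1 / m) (r * (m + f)) fun t ↦ groupPhase a i (r * t) := by
  have hm : (0 : ℝ) < m := mod_cast i.pos
  have hoffset : (i / m : ℝ) ≤ 1 := (div_le_one hm).mpr (mod_cast i.is_lt.le)
  have hoffset₀ : (0 : ℝ) ≤ i / m := by positivity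
  refine ⟨by simpa [groupPhase, occupation_zero] using hoffset, fun {s t} hst ↦ ?_,
    fun {s t} hst ↦ ?_, B + 2, fun t ht ↦ ?_⟩
  · have hslope : (m + f) * (1 - 1 / m) ≤ m := by
      rw [mul_one_sub, mul_one_div, add_div, div_self hm.ne']
      linarith [div_nonneg hf₀ hm.le]
    calc r * (m + f) * (1 - 1 / m) * (t - s)
        = (m + f) * (1 - 1 / m) * (r * (t - s)) := by ring
      _ ≤ m * (r * (t - s)) := by have := sub_nonneg.mpr hst; gcongr
      _ ≤ groupPhase a i (r * t) - groupPhase a i (r * s) := by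
        unfold groupPhase
        linarith [monotone_occupation (a · = i) (mul_le_mul_of_nonneg_left hst hr)]
  · have hslope : m + 1 ≤ (m + f) * (1 + 1 / m) := by
      rw [mul_one_add, mul_one_div, add_div, div_self hm.ne']
      linarith [div_nonneg hf₀ hm.le]
    calc groupPhase a i (r * t) - groupPhase a i (r * s)
        ≤ (m + 1) * (r * (t - s)) := by
          unfold groupPhase
          linarith [occupation_sub_le (a · = i) (mul_le_mul_of_nonneg_left hst hr)]
      _ ≤ (m + f) * (1 + 1 / m) * (r * (t - s)) := by have := sub_nonneg.mpr hst; gcongr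
      _ = r * (m + f) * (1 + 1 / m) * (t - s) := by ring
  · calc |groupPhase a i (r * t) - r * (m + f) * t|
        = |(occupation (a · = i) (r * t) - f * (r * t)) + i / m| := by
          unfold groupPhase
          ring_nf
      _ ≤ (B + 1) + 1 := (abs_add_le _ _).trans <| add_le_add
        (abs_occupation_sub_le _ hf₀ hf₁ ha (mul_nonneg hr ht)) (by rwa [abs_of_nonneg hoffset₀])
      _ = B + 2 := by ring

variable {C : Type*} {κ E E' : ℝ} {d : C → ℝ} {S T : Finset C} {m : ℕ}

/-- The colors in `S` have phases of frequencies `d` which are balanced: up to the error `E`, the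
number of occurrences they prescribe up to time `t` is linear in `t`. -/
def HasBalancedPhases (κ : ℝ) (d : C → ℝ) (S : Finset C) (E : ℝ) : Prop :=
  ∃ ψ : C → ℝ → ℝ, (∀ σ ∈ S, IsPhase κ (d σ) (ψ σ)) ∧
    ∀ t, 0 ≤ t → |∑ σ ∈ S, (⌊ψ σ t⌋₊ : ℝ) - (∑ σ ∈ S, d σ) * t| ≤ E

namespace HasBalancedPhases

theorem mono {κ' : ℝ} (h : HasBalancedPhases κ d S E) (hd : ∀ σ ∈ S, 0 ≤ d σ) (hκ : κ ≤ κ')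
    (hE : E ≤ E') : HasBalancedPhases κ' d S E' := by
  obtain ⟨ψ, hψ, hsum⟩ := h
  exact ⟨ψ, fun σ hσ ↦ (hψ σ hσ).mono (hd σ hσ) hκ, fun t ht ↦ (hsum t ht).trans hE⟩

theorem map {ι : Type*} (e : ι ↪ C) {S : Finset ι} (h : HasBalancedPhases κ (d ∘ e) S E) :
    HasBalancedPhases κ d (S.map e) E := by
  obtain ⟨ψ, hψ, hsum⟩ := h
  refine ⟨Function.extend e ψ 0, forall_mem_map.mpr fun i hi ↦ ?_, fun t ht ↦ ?_⟩
  · rw [e.injective.extend_apply]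
    exact hψ i hi
  · simpa only [sum_map, e.injective.extend_apply, Function.comp_apply] using hsum t ht

theorem union [DecidableEq C] (hS : HasBalancedPhases κ d S E) (hT : HasBalancedPhases κ d T E')
    (hST : Disjoint S T) : HasBalancedPhases κ d (S ∪ T) (E + E') := by
  obtain ⟨ψ, hψ, hψsum⟩ := hS
  obtain ⟨φ, hφ, hφsum⟩ := hT
  have hTS : ∀ σ ∈ T, σ ∉ S := fun σ hσT hσS ↦ disjoint_left.mp hST hσS hσT
  refine ⟨fun σ ↦ if σ ∈ S then ψ σ else φ σ, fun σ hσ ↦ ?_, fun t ht ↦ ?_⟩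
  · dsimp only
    split_ifs with hσS
    · exact hψ σ hσS
    · exact hφ σ ((mem_union.mp hσ).resolve_left hσS)
  · have hsumS : ∑ σ ∈ S, (⌊(if σ ∈ S then ψ σ else φ σ) t⌋₊ : ℝ) = ∑ σ ∈ S, (⌊ψ σ t⌋₊ : ℝ) :=
      sum_congr rfl fun σ hσ ↦ by rw [if_pos hσ]
    have hsumT : ∑ σ ∈ T, (⌊(if σ ∈ S then ψ σ else φ σ) t⌋₊ : ℝ) = ∑ σ ∈ T, (⌊φ σ t⌋₊ : ℝ) :=
      sum_congr rfl fun σ hσ ↦ by rw [if_neg (hTS σ hσ)]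
    rw [sum_union hST, sum_union hST, hsumS, hsumT, add_mul, add_sub_add_comm]
    exact (abs_add_le _ _).trans (add_le_add (hψsum t ht) (hφsum t ht))

theorem of_nonneg (hκ : 0 ≤ κ) (hd : ∀ σ ∈ S, 0 ≤ d σ) : HasBalancedPhases κ d S #S := by
  refine ⟨fun σ t ↦ d σ * t, fun σ hσ ↦ .linear hκ (hd σ hσ), fun t ht ↦ ?_⟩
  rw [sum_mul, ← sum_sub_distrib, card_eq_sum_ones, Nat.cast_sum, Nat.cast_one]
  refine (abs_sum_le_sum_abs _ _).trans (sum_le_sum fun σ hσ ↦ abs_le.mpr ?_)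
  constructor <;>
    linarith [Nat.lt_floor_add_one (d σ * t), Nat.floor_le (mul_nonneg (hd σ hσ) ht)]

theorem of_nearly_equal_fin {d : Fin m → ℝ} (hpos : 0 < ∑ i, d i)
    (hd : ∀ i, m * ∑ k, d k ≤ (m ^ 2 + 1) * d i) : HasBalancedPhases (1 / m) d univ 2 := by
  have hm : (0 : ℝ) < m ^ 2 + 1 := by positivity
  set r := (∑ i, d i) / (m ^ 2 + 1) with hr
  have hr₀ : 0 < r := div_pos hpos hm
  set f : Fin m → ℝ := fun i ↦ d i / r - m with hf
  have hdf (i : Fin m) : d i = r * (m + f i) := by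
    rw [hf, add_sub_cancel, mul_div_cancel₀ _ hr₀.ne']
  have hf₀ (i : Fin m) : 0 ≤ f i := by
    rw [hf, sub_nonneg, le_div_iff₀ hr₀, hr, mul_div_assoc', div_le_iff₀ hm]
    linarith [hd i]
  have hsum : ∑ i, f i = 1 := by
    rw [hf, sum_sub_distrib, ← sum_div, sum_const, card_univ, Fintype.card_fin, nsmul_eq_mul, hr,
      div_div_cancel₀ hpos.ne']
    ring
  have hf₁ (i : Fin m) : f i ≤ 1 :=
    hsum ▸ single_le_sum (f := f) (fun k _ ↦ hf₀ k) (mem_univ i)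
  obtain ⟨a, ha⟩ := exists_seq_count_close hf₀ hsum
  refine ⟨fun i t ↦ groupPhase a i (r * t), fun i _ ↦ ?_, fun t ht ↦ ?_⟩
  · rw [hdf i]
    exact isPhase_groupPhase (hf₀ i) (hf₁ i) (fun n ↦ ha n i) hr₀.le
  · have hrate : (∑ i, d i) * t = (m ^ 2 + 1) * (r * t) := by
      rw [hr, ← mul_assoc, mul_div_cancel₀ _ hm.ne']
    rw [hrate]
    exact abs_sum_floor_groupPhase_sub_le a (mul_nonneg hr₀.le ht)

theorem of_nearly_equal (hT : #T = m) (hpos : 0 < ∑ σ ∈ T, d σ)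
    (hd : ∀ σ ∈ T, m * ∑ τ ∈ T, d τ ≤ (m ^ 2 + 1) * d σ) : HasBalancedPhases (1 / m) d T 2 := by
  obtain ⟨e, rfl⟩ : ∃ e : Fin m ↪ C, univ.map e = T :=
    ⟨(T.equivFinOfCardEq hT).symm.toEmbedding.trans (.subtype _), by
      rw [← map_map, map_univ_equiv, univ_eq_attach, attach_map_val]⟩
  rw [sum_map] at hpos
  exact (of_nearly_equal_fin hpos fun i ↦ by simpa using hd (e i) (by simp)).map e

end HasBalancedPhases

theorem exists_subset_card_eq_sub_le {x w : ℝ} {Q : ℕ} (hQ : 0 < Q) (hw : 0 < w)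
    (hd : ∀ σ ∈ S, x < d σ ∧ d σ ≤ x + w) (hcard : Q * m ≤ #S) :
    ∃ T ⊆ S, #T = m ∧ ∀ σ ∈ T, ∀ τ ∈ T, d σ - d τ ≤ w / Q := by
  classical
  have hQ' : (0 : ℝ) < Q := mod_cast hQ
  let cell (σ : C) : ℕ := ⌈(d σ - x) / (w / Q)⌉₊
  have hcell : ∀ σ ∈ S, cell σ ∈ Icc 1 Q := fun σ hσ ↦ by
    obtain ⟨hxd, hdw⟩ := hd σ hσ
    refine mem_Icc.mpr ⟨Nat.one_le_ceil_iff.mpr (div_pos (sub_pos.mpr hxd) (by positivity)),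
      Nat.ceil_le.mpr ?_⟩
    rw [div_le_iff₀ (by positivity), mul_div_cancel₀ _ hQ'.ne']
    linarith
  obtain ⟨k, hk, hfiber⟩ := exists_le_card_fiber_of_mul_le_card_of_maps_to hcell
    (nonempty_Icc.mpr hQ) (by simpa using hcard)
  obtain ⟨T, hT, hTcard⟩ := exists_subset_card_eq hfiber
  refine ⟨T, hT.trans (filter_subset _ _), hTcard, fun σ hσ τ hτ ↦ ?_⟩
  have hbounds : ∀ σ ∈ T, (k - 1) * (w / Q) < d σ - x ∧ d σ - x ≤ k * (w / Q) := fun σ hσ ↦ by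
    have hσk : cell σ = k := (mem_filter.mp (hT hσ)).2
    have hk₀ : k ≠ 0 := Nat.one_le_iff_ne_zero.mp (mem_Icc.mp hk).1
    have hceil := (Nat.ceil_eq_iff hk₀).mp hσk
    rw [Nat.cast_pred (Nat.pos_of_ne_zero hk₀)] at hceil
    rwa [lt_div_iff₀ (by positivity), div_le_iff₀ (by positivity)] at hceil
  linarith [(hbounds σ hσ).2, (hbounds τ hτ).1]

theorem HasBalancedPhases.of_sub_le {β : ℝ} (hm : 0 < m) (hβ : 0 < β) (hT : #T = m)
    (hd : ∀ σ ∈ T, β < d σ) (hsub : ∀ σ ∈ T, ∀ τ ∈ T, d σ - d τ ≤ β / m ^ 2) :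
    HasBalancedPhases (1 / m) d T 2 := by
  have hTne : T.Nonempty := card_pos.mp (hT ▸ hm)
  refine .of_nearly_equal hT (sum_pos (fun σ hσ ↦ hβ.trans (hd σ hσ)) hTne) fun σ hσ ↦ ?_
  have hsum : ∑ τ ∈ T, d τ ≤ m * (d σ + β / m ^ 2) := by
    rw [← nsmul_eq_mul, ← hT]
    exact sum_le_card_nsmul _ _ _ fun τ hτ ↦ by linarith [hT ▸ hsub τ hτ σ hσ]
  calc m * ∑ τ ∈ T, d τ ≤ m * (m * (d σ + β / m ^ 2)) := by gcongr
    _ = m ^ 2 * d σ + β := by field_simp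
    _ ≤ (m ^ 2 + 1) * d σ := by linarith [hd σ hσ]

theorem HasBalancedPhases.of_comparable {β : ℝ} (hm : 0 < m) (hβ : 0 < β)
    (hd : ∀ σ ∈ S, β < d σ ∧ d σ ≤ 2 * β) :
    HasBalancedPhases (1 / m) d S (2 * #S / m + m ^ 3) := by
  classical
  induction S using Finset.strongInduction with
  | H S ih =>
    have hd₀ : ∀ σ ∈ S, 0 < d σ := fun σ hσ ↦ hβ.trans (hd σ hσ).1
    obtain hsmall | hlarge := lt_or_ge #S (m ^ 2 * m)
    · have hcard : (#S : ℝ) ≤ m ^ 3 := by exact_mod_cast (pow_succ m 2).symm ▸ hsmall.le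
      refine (HasBalancedPhases.of_nonneg (by positivity) fun σ hσ ↦ (hd₀ σ hσ).le).mono
        (fun σ hσ ↦ (hd₀ σ hσ).le) le_rfl (hcard.trans (le_add_of_nonneg_left (by positivity)))
    · obtain ⟨T, hTS, hTcard, hT⟩ := exists_subset_card_eq_sub_le (x := β) (pow_pos hm 2) hβ
        (fun σ hσ ↦ ⟨(hd σ hσ).1, by linarith [(hd σ hσ).2]⟩) hlarge
      have hTne : T.Nonempty := card_pos.mp (hTcard ▸ hm)
      have hTgroup : HasBalancedPhases (1 / m) d T 2 :=
        .of_sub_le hm hβ hTcard (fun σ hσ ↦ (hd σ (hTS hσ)).1) (by simpa using hT)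
      have hrest := ih (S \ T) (sdiff_ssubset hTS hTne) fun σ hσ ↦ hd σ (mem_sdiff.mp hσ).1
      have herror : 2 * (#(S \ T) : ℝ) / m + m ^ 3 + 2 = 2 * #S / m + m ^ 3 := by
        rw [card_sdiff_of_subset hTS, Nat.cast_sub (card_le_card hTS), hTcard]
        field_simp
        ring
      have hunion := hrest.union hTgroup sdiff_disjoint
      rwa [sdiff_union_of_subset hTS, herror] at hunion

theorem HasBalancedPhases.of_comparable_of_pow_lt_card {β R : ℝ} (hR : 4 ≤ R) (hβ : 0 < β)
    (hd : ∀ σ ∈ S, β < d σ ∧ d σ ≤ 2 * β) (hcard : R ^ 4 < #S) :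
    HasBalancedPhases (2 / R) d S (4 * #S / R) := by
  have hfloor : (⌊R⌋₊ : ℝ) ≤ R := Nat.floor_le (by linarith)
  have hfloor' : 3 / 4 * R ≤ ⌊R⌋₊ := by linarith [Nat.lt_floor_add_one R]
  have hm : 0 < ⌊R⌋₊ := Nat.floor_pos.mpr (by linarith)
  refine (of_comparable hm hβ hd).mono (fun σ hσ ↦ hβ.le.trans (hd σ hσ).1.le) ?_ ?_
  · rw [div_le_div_iff₀ (by linarith) (by linarith)]
    linarith
  · have hgroups : 2 * (#S : ℝ) / ⌊R⌋₊ ≤ 3 * #S / R := by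
      rw [div_le_div_iff₀ (by linarith) (by linarith)]
      nlinarith [(#S).cast_nonneg (α := ℝ)]
    have hrest : (⌊R⌋₊ : ℝ) ^ 3 ≤ #S / R := by
      rw [le_div_iff₀ (by linarith)]
      calc (⌊R⌋₊ : ℝ) ^ 3 * R ≤ R ^ 3 * R := by gcongr
        _ = R ^ 4 := (pow_succ R 3).symm
        _ ≤ (#S : ℝ) := hcard.le
    calc 2 * (#S : ℝ) / ⌊R⌋₊ + ⌊R⌋₊ ^ 3 ≤ 3 * #S / R + #S / R := add_le_add hgroups hrest
      _ = 4 * #S / R := by ring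

end Phases

section RegularSequences

open Filter Topology

variable {d B : ℝ} {g : ℕ → ℕ}

theorem tendsto_div_natCast_of_abs_sub_le {u : ℕ → ℝ} (h : ∀ n, |u n - d * n| ≤ B) :
    Tendsto (fun n ↦ u n / n) atTop (𝓝 d) := by
  rw [tendsto_iff_norm_sub_tendsto_zero]
  refine squeeze_zero' (.of_forall fun _ ↦ norm_nonneg _) ?_
    (tendsto_const_div_atTop_nhds_zero_nat B)
  filter_upwards [eventually_gt_atTop 0] with n hn
  have hn' : (0 : ℝ) < n := mod_cast hn
  rw [Real.norm_eq_abs, div_sub' hn'.ne', abs_div, abs_of_pos hn', mul_comm (n : ℝ)]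
  exact div_le_div_of_nonneg_right (h n) hn'.le

theorem abs_ncard_sub_le (hg : StrictMono g) (hd : 0 < d) (h : ∀ j : ℕ, |d * g j - j| ≤ B)
    (n : ℕ) : |({m : ℕ | 1 ≤ g m ∧ g m ≤ n}.ncard : ℝ) - d * n| ≤ B + 1 := by
  have hB : 0 ≤ B := (abs_nonneg _).trans (h 0)
  set s := {m : ℕ | 1 ≤ g m ∧ g m ≤ n}
  have hupper : s ⊆ Finset.range (⌊d * n + B⌋₊ + 1) := fun m hm ↦ by
    have hgm : d * g m ≤ d * n := mul_le_mul_of_nonneg_left (mod_cast hm.2) hd.le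
    rw [Finset.coe_range, Set.mem_Iio, Nat.lt_add_one_iff, Nat.le_floor_iff (by positivity)]
    linarith [(abs_le.mp (h m)).1]
  have hlower : (Finset.Icc 1 ⌊d * n - B⌋₊ : Set ℕ) ⊆ s := fun m hm ↦ by
    rw [Finset.coe_Icc, Set.mem_Icc] at hm
    refine ⟨hm.1.trans (hg.id_le m), ?_⟩
    have hm_le := (Nat.le_floor_iff' (by omega)).mp hm.2
    have hgm : d * g m ≤ d * n := by linarith [(abs_le.mp (h m)).2]
    exact_mod_cast le_of_mul_le_mul_left hgm hd
  have hcard_upper := Set.ncard_le_ncard hupper (Finset.finite_toSet _)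
  have hcard_lower := Set.ncard_le_ncard hlower ((Finset.finite_toSet _).subset hupper)
  rw [Set.ncard_coe_finset, Finset.card_range, ← Nat.cast_le (α := ℝ), Nat.cast_succ]
    at hcard_upper
  rw [Set.ncard_coe_finset, Nat.card_Icc, Nat.add_sub_cancel, ← Nat.cast_le (α := ℝ)]
    at hcard_lower
  have hfloor : (⌊d * n + B⌋₊ : ℝ) ≤ d * n + B := Nat.floor_le (by positivity)
  rw [abs_le]
  constructor <;> linarith [Nat.sub_one_lt_floor (d * n - B)]

theorem hasDensityFun_of_abs_sub_le (hg : StrictMono g) (hd : 0 < d)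
    (h : ∀ j : ℕ, |d * g j - j| ≤ B) : HasDensityFun g d :=
  tendsto_div_natCast_of_abs_sub_le (abs_ncard_sub_le hg hd h)

theorem sub_mem_Icc_of_gaps {A : ℝ} {u : ℕ → ℝ} (h : ∀ n, u (n + 1) - u n ∈ Set.Icc A B)
    (n r : ℕ) : u (n + r) - u n ∈ Set.Icc (r * A) (r * B) := by
  induction r with
  | zero => simp
  | succ r ih =>
    obtain ⟨hA, hB⟩ := h (n + r)
    rw [← add_assoc, Nat.cast_succ]
    constructor <;> linarith [ih.1, ih.2]

theorem QRk_le_of_gaps {A : ℝ} {k : ℕ} (hk : 1 ≤ k) (hA : 0 < A)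
    (h : ∀ n, (g (n + 1) : ℝ) - g n ∈ Set.Icc A B) : QRk k g ≤ ENNReal.ofReal (B / A) := by
  refine iSup_le fun q ↦ iSup_le fun r ↦ iSup_le fun hq ↦ iSup_le fun hr ↦ iSup_le fun n ↦
    iSup_le fun m ↦ ?_
  have hq₀ : (0 : ℝ) < q := mod_cast hk.trans hq
  have hr₀ : (0 : ℝ) < r := mod_cast hk.trans hr
  have hsum (n r : ℕ) : (g (n + r) : ℝ) - g n ∈ Set.Icc (r * A) (r * B) :=
    sub_mem_Icc_of_gaps (u := fun n ↦ (g n : ℝ)) h n r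
  have hcast (n r : ℕ) : ((g (n + r) - g n : ℕ) : ℝ) = (g (n + r) : ℝ) - g n := by
    refine Nat.cast_sub (Nat.cast_le (α := ℝ) |>.mp ?_)
    linarith [(hsum n r).1, mul_nonneg r.cast_nonneg hA.le]
  have hnum := (hsum n r).2
  have hden := (hsum m q).1
  rw [← hcast] at hnum hden
  have hden₀ : (0 : ℝ) < (g (m + q) - g m : ℕ) := (mul_pos hq₀ hA).trans_le hden
  rw [← ENNReal.ofReal_natCast q, ← ENNReal.ofReal_natCast r,
    ← ENNReal.ofReal_natCast (g (n + r) - _), ← ENNReal.ofReal_natCast (g (m + q) - _),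
    ← ENNReal.ofReal_div_of_pos hr₀, ← ENNReal.ofReal_div_of_pos hden₀,
    ← ENNReal.ofReal_mul (by positivity)]
  refine ENNReal.ofReal_le_ofReal ?_
  calc (q / r : ℝ) * ((g (n + r) - g n : ℕ) / (g (m + q) - g m : ℕ))
      ≤ q / r * (r * B / (q * A)) := by gcongr; exact (Nat.cast_nonneg _).trans hnum
    _ = B / A := by field_simp

theorem QRk_le_of_abs_mul_gap_sub_one_le {θ : ℝ} (hd : 0 < d) (hθ : θ < 1)
    (h : ∀ n, |d * (g (n + 1) - g n) - 1| ≤ θ) :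
    QRk 1 g ≤ ENNReal.ofReal ((1 + θ) / (1 - θ)) := by
  rw [← div_div_div_cancel_right₀ hd.ne']
  refine QRk_le_of_gaps le_rfl (div_pos (sub_pos.mpr hθ) hd) fun n ↦ ?_
  have hgap := abs_le.mp (h n)
  rw [Set.mem_Icc, div_le_iff₀' hd, le_div_iff₀' hd]
  constructor <;> linarith

/-- The sequence `g` realizes the phase `ψ` with tolerance `c`: its `j`-th term lies within `c` of
the time prescribed by `ψ`, except that rounding down may cost another unit. -/
def Follows (c : ℝ) (ψ : ℝ → ℝ) (g : ℕ → ℕ) : Prop :=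
  ∀ j : ℕ, ∃ τ : ℝ, 0 ≤ τ ∧ ψ τ = j + 1 ∧ τ - c - 1 ≤ g j ∧ g j ≤ τ + c

namespace Follows

variable {c κ : ℝ} {ψ : ℝ → ℝ}

theorem abs_mul_gap_sub_one_le (h : Follows c ψ g) (hψ : IsPhase κ d ψ) (hd : 0 < d)
    (hκ : κ ≤ 1 / 2) (j : ℕ) : |d * (g (j + 1) - g j) - 1| ≤ 2 * κ + (2 * c + 1) * d := by
  obtain ⟨s, -, hψs, hgs, hgs'⟩ := h j
  obtain ⟨t, -, hψt, hgt, hgt'⟩ := h (j + 1)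
  push_cast at hψt
  have hst : s < t := (hψ.strictMono hd (by linarith)).lt_iff_lt.mp (by linarith)
  set x := d * (t - s) with hx
  have hx₀ : 0 < x := mul_pos hd (sub_pos.mpr hst)
  have hle : x * (1 - κ) ≤ 1 := by linarith [hψ.le_sub hst.le]
  have hge : 1 ≤ x * (1 + κ) := by linarith [hψ.sub_le hst.le]
  have hκ₀ : 0 ≤ κ := by nlinarith
  have hx₂ : x ≤ 2 := by nlinarith
  have hxκ : x * κ ≤ 2 * κ := mul_le_mul_of_nonneg_right hx₂ hκ₀
  have hideal : |x - 1| ≤ 2 * κ := by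
    rw [abs_le]
    constructor <;> linarith
  have hround : |d * ((g (j + 1) - t) - (g j - s))| ≤ (2 * c + 1) * d := by
    rw [abs_mul, abs_of_pos hd, mul_comm]
    refine mul_le_mul_of_nonneg_right (abs_le.mpr ⟨?_, ?_⟩) hd.le <;> linarith
  calc |d * (g (j + 1) - g j) - 1| = |(x - 1) + d * ((g (j + 1) - t) - (g j - s))| := by
        rw [hx]; ring_nf
    _ ≤ 2 * κ + (2 * c + 1) * d := (abs_add_le _ _).trans (add_le_add hideal hround)

theorem hasDensityFun (h : Follows c ψ g) (hψ : IsPhase κ d ψ) (hg : StrictMono g) (hd : 0 < d) :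
    HasDensityFun g d := by
  obtain ⟨B, hB⟩ := hψ.exists_abs_sub_le
  refine hasDensityFun_of_abs_sub_le (B := B + 1 + d * (c + 1)) hg hd fun j ↦ ?_
  obtain ⟨τ, hτ, hψτ, hgτ, hgτ'⟩ := h j
  have hideal := abs_le.mp (hB τ hτ)
  have hlower := mul_le_mul_of_nonneg_left hgτ hd.le
  have hupper := mul_le_mul_of_nonneg_left hgτ' hd.le
  rw [abs_le]
  constructor <;> linarith

end Follows

end RegularSequences

section Scheduling

open Finset

variable {C ι : Type*} {b : C → ι} {S : ι → Finset C} {d : C → ℝ}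

theorem hasSum_sum_fiber (hS : ∀ {i σ}, σ ∈ S i ↔ b σ = i) {s : ℝ} (hsum : HasSum d s) :
    HasSum (fun i ↦ ∑ σ ∈ S i, d σ) s := by
  have hfiber (i : ι) : ∑' σ : b ⁻¹' {i}, d σ = ∑ σ ∈ S i, d σ :=
    (tsum_congr_set_coe d (Set.ext fun _ ↦ hS.symm)).trans (Finset.tsum_subtype' (S i) d)
  simpa only [hfiber] using hsum.tsum_fiberwise b

theorem exists_follows (hS : ∀ {i σ}, σ ∈ S i ↔ b σ = i) (hd : ∀ σ, 0 < d σ) (hsum : HasSum d 1)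
    {κ : ℝ} (hκ : κ < 1) {E : ι → ℝ} (hphase : ∀ i, HasBalancedPhases κ d (S i) (E i)) :
    ∃ (g : C → ℕ → ℕ) (ψ : C → ℝ → ℝ), (Function.uncurry g).Bijective ∧
      ∀ σ, IsPhase κ (d σ) (ψ σ) ∧ Follows (E (b σ) / ∑ τ ∈ S (b σ), d τ) (ψ σ) (g σ) := by
  choose φ hφ hbalanced using hphase
  have hψ (σ : C) : IsPhase κ (d σ) (φ (b σ) σ) := hφ _ _ (hS.mpr rfl)
  choose τ hτ hψτ using fun x : C × ℕ ↦ (hψ x.1).exists_eq (hd x.1) hκ x.2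
  let N (i : ι) (t : ℝ) : Finset (C × ℕ) :=
    ((S i).sigma fun σ ↦ range ⌊φ (b σ) σ t⌋₊).map (Equiv.sigmaEquivProd C ℕ).toEmbedding
  have hrate (i : ι) : 0 ≤ ∑ σ ∈ S i, d σ := sum_nonneg fun σ _ ↦ (hd σ).le
  have hfluid : IsNearlyFluid (fun x : C × ℕ ↦ b x.1) τ (fun i ↦ ∑ σ ∈ S i, d σ)
      (fun i ↦ E i / ∑ σ ∈ S i, d σ) N := {
    time_nonneg := hτ
    shift_nonneg i := div_nonneg ((abs_nonneg _).trans (hbalanced i 0 le_rfl)) (hrate i)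
    rate_nonneg := hrate
    hasSum_rate := hasSum_sum_fiber hS hsum
    mem_iff := by
      rintro i t ⟨σ, j⟩
      simp [N, hS, (hψ σ).lt_floor_iff (hd σ) hκ (hψτ (σ, j))]
    abs_card_sub_le i t ht := by
      obtain hempty | hne := (S i).eq_empty_or_nonempty
      · simp [N, hempty]
      · rw [card_map, card_sigma, mul_div_cancel₀ _ (sum_pos (fun σ _ ↦ hd σ) hne).ne']
        refine le_trans (le_of_eq ?_) (hbalanced i t ht)
        push_cast [card_range]
        congr! 3 with σ hσ
        rw [hS.mp hσ] }
  obtain ⟨T, hT, hTτ⟩ := hfluid.exists_bijective_near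
  exact ⟨Function.curry T, fun σ ↦ φ (b σ) σ, by rwa [Function.uncurry_curry],
    fun σ ↦ ⟨hψ σ, fun j ↦ ⟨τ (σ, j), hτ (σ, j), hψτ (σ, j), hTτ (σ, j)⟩⟩⟩

theorem exists_coloring_of_hasBalancedPhases (hS : ∀ {i σ}, σ ∈ S i ↔ b σ = i) (hd : ∀ σ, 0 < d σ)
    (hsum : HasSum d 1) {κ θ : ℝ} (hκ : κ ≤ 1 / 2) (hθ : θ < 1) {E : ι → ℝ}
    (hphase : ∀ i, HasBalancedPhases κ d (S i) (E i))
    (htol : ∀ σ, 2 * κ + (2 * (E (b σ) / ∑ τ ∈ S (b σ), d τ) + 1) * d σ ≤ θ) :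
    ∃ g : C → ℕ → ℕ, IsColoring g ∧ ∀ σ, HasDensityFun (g σ) (d σ) ∧
      ∀ n, |d σ * (g σ (n + 1) - g σ n) - 1| ≤ θ := by
  obtain ⟨g, ψ, hg, hψ⟩ := exists_follows hS hd hsum (hκ.trans_lt one_half_lt_one) hphase
  have hgap (σ : C) (n : ℕ) : |d σ * (g σ (n + 1) - g σ n) - 1| ≤ θ :=
    ((hψ σ).2.abs_mul_gap_sub_one_le (hψ σ).1 (hd σ) hκ n).trans (htol σ)
  have hmono (σ : C) : StrictMono (g σ) := strictMono_nat_of_lt_succ fun n ↦ by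
    have hpos : 0 < d σ * (g σ (n + 1) - g σ n) := by linarith [(abs_le.mp (hgap σ n)).1]
    exact_mod_cast sub_pos.mp (pos_of_mul_pos_right hpos (hd σ).le)
  exact ⟨g, ⟨hmono, (Function.bijective_iff_existsUnique _).mp hg⟩,
    fun σ ↦ ⟨(hψ σ).2.hasDensityFun (hψ σ).1 (hmono σ) (hd σ), hgap σ⟩⟩

theorem card_mul_le_two_mul_sum {s : Finset C} {β : ℝ} (hd : ∀ σ ∈ s, β < d σ ∧ d σ ≤ 2 * β)
    {τ : C} (hτ : τ ∈ s) : #s * d τ ≤ 2 * ∑ σ ∈ s, d σ := by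
  rw [← nsmul_eq_mul, mul_sum]
  exact card_nsmul_le_sum _ _ _ fun σ hσ ↦ by linarith [(hd τ hτ).2, (hd σ hσ).1]

theorem exists_coloring_of_comparable (hS : ∀ {i σ}, σ ∈ S i ↔ b σ = i) (hsum : HasSum d 1)
    {β : ι → ℝ} (hβ : ∀ i, 0 < β i) (hd : ∀ i, ∀ σ ∈ S i, β i < d σ ∧ d σ ≤ 2 * β i) {R : ℝ}
    (hR : 21 < R) (hcard : ∀ i, R ^ 4 < #(S i)) :
    ∃ g : C → ℕ → ℕ, IsColoring g ∧ ∀ σ, HasDensityFun (g σ) (d σ) ∧ d σ * R ^ 4 ≤ 2 ∧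
      ∀ n, |d σ * (g σ (n + 1) - g σ n) - 1| ≤ 21 / R := by
  have hR₀ : 0 < R := by linarith
  have hmem (σ : C) : σ ∈ S (b σ) := hS.mpr rfl
  have hd₀ (σ : C) : 0 < d σ := (hβ _).trans (hd _ σ (hmem σ)).1
  have hphase (i : ι) : HasBalancedPhases (2 / R) d (S i) (4 * #(S i) / R) :=
    .of_comparable_of_pow_lt_card (by linarith) (hβ i) (hd i) (hcard i)
  have hshare (σ : C) : #(S (b σ)) * d σ ≤ 2 * ∑ τ ∈ S (b σ), d τ :=
    card_mul_le_two_mul_sum (hd _) (hmem σ)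
  have hsmall (σ : C) : d σ * R ^ 4 ≤ 2 := by
    have hle_one : ∑ τ ∈ S (b σ), d τ ≤ 1 := sum_le_hasSum _ (fun τ _ ↦ (hd₀ τ).le) hsum
    nlinarith [hshare σ, mul_le_mul_of_nonneg_right (hcard (b σ)).le (hd₀ σ).le]
  have hle (σ : C) : d σ ≤ 1 / R := by
    have hR₃ : R ≤ R ^ 3 := le_self_pow₀ (by linarith) three_ne_zero
    rw [le_div_iff₀ hR₀]
    nlinarith [hsmall σ, mul_le_mul_of_nonneg_left hR₃ (mul_pos (hd₀ σ) hR₀).le,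
      mul_pos (hd₀ σ) hR₀]
  have htol (σ : C) : 2 * (2 / R) +
      (2 * (4 * #(S (b σ)) / R / ∑ τ ∈ S (b σ), d τ) + 1) * d σ ≤ 21 / R := by
    have hW : 0 < ∑ τ ∈ S (b σ), d τ := sum_pos (fun τ _ ↦ hd₀ τ) ⟨σ, hmem σ⟩
    have hshift : 4 * #(S (b σ)) / R / (∑ τ ∈ S (b σ), d τ) * d σ ≤ 8 / R := by
      rw [div_right_comm, div_mul_eq_mul_div, div_mul_eq_mul_div]
      gcongr
      rw [div_le_iff₀ hW]
      linarith [hshare σ]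
    calc _ ≤ 2 * (2 / R) + (2 * (8 / R) + 1 / R) := by linarith [hle σ]
      _ = 21 / R := by ring
  obtain ⟨g, hg, hgd⟩ := exists_coloring_of_hasBalancedPhases hS hd₀ hsum
    (by rw [div_le_iff₀ hR₀]; linarith) ((div_lt_one hR₀).mpr hR) hphase htol
  exact ⟨g, hg, fun σ ↦ ⟨(hgd σ).1, hsmall σ, (hgd σ).2⟩⟩

theorem one_add_div_one_sub_le {x : ℝ} (hx₀ : 0 ≤ x) (hx : x ≤ 1 / 2) :
    (1 + x) / (1 - x) ≤ 1 + 4 * x := by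
  rw [div_le_iff₀ (by linarith)]
  nlinarith [mul_le_mul_of_nonneg_left hx hx₀]

theorem quarter_le_gap {f : ℕ → ℕ} (hf : StrictMono f) {x ρ M : ℝ} (hx : 0 < x) (hρ : ρ ≤ 1 / 2)
    (hM : x * M ≤ 2) {n : ℕ} (hgap : |x * (f (n + 1) - f n) - 1| ≤ ρ) :
    M / 4 ≤ (f (n + 1) - f n : ℕ) := by
  rw [Nat.cast_sub (hf n.lt_succ_self).le]
  refine le_of_mul_le_mul_left ?_ hx
  linarith [(abs_le.mp hgap).1]

theorem exists_coloring_of_comparable_weights [Nonempty C] (hS : ∀ {i σ}, σ ∈ S i ↔ b σ = i)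
    {p : C → ℝ} (hp : Summable p) {β : ι → ℝ} (hβ : ∀ i, 0 < β i)
    (hpβ : ∀ i, ∀ σ ∈ S i, β i < p σ ∧ p σ ≤ 2 * β i) {N : ℝ} (hN : 10 ^ 8 ≤ N)
    (hcard : ∀ i, N < #(S i)) :
    ∃ g : C → ℕ → ℕ, IsColoring g ∧ ∀ σ, HasDensityFun (g σ) (p σ / ∑' τ, p τ) ∧
      QRk 1 (g σ) ≤ ENNReal.ofReal (1 + 1000 / N ^ ((1 : ℝ) / 4)) ∧
      ∀ n, N / 4 ≤ ((g σ (n + 1) - g σ n : ℕ) : ℝ) := by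
  set R := N ^ ((1 : ℝ) / 4) with hR
  have hN₀ : 0 ≤ N := le_trans (by norm_num) hN
  have hRN : R ^ 4 = N := by rw [hR, ← Real.rpow_mul_natCast hN₀]; norm_num
  have hR₁₀₀ : 100 ≤ R :=
    le_of_pow_le_pow_left₀ four_ne_zero (Real.rpow_nonneg hN₀ _) (by rw [hRN]; linarith)
  have hp₀ (σ : C) : 0 < p σ := (hβ _).trans (hpβ _ σ (hS.mpr rfl)).1
  have hP : 0 < ∑' τ, p τ := hp.tsum_pos (fun τ ↦ (hp₀ τ).le) (Classical.arbitrary C) (hp₀ _)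
  have hd (σ : C) : 0 < p σ / ∑' τ, p τ := div_pos (hp₀ σ) hP
  have hdβ (i : ι) (σ : C) (hσ : σ ∈ S i) :
      β i / ∑' τ, p τ < p σ / ∑' τ, p τ ∧ p σ / ∑' τ, p τ ≤ 2 * (β i / ∑' τ, p τ) := by
    rw [mul_div_assoc']
    exact (hpβ i σ hσ).imp (div_lt_div_of_pos_right · hP) (div_le_div_of_nonneg_right · hP.le)
  obtain ⟨g, hg, hgd⟩ := exists_coloring_of_comparable hS (div_self hP.ne' ▸ hp.hasSum.div_const _)
    (fun i ↦ div_pos (hβ i) hP) hdβ (by linarith : 21 < R) (by rwa [hRN])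
  have hθ : 21 / R ≤ 1 / 2 := by rw [div_le_iff₀ (by linarith)]; linarith
  have hQR : (1 + 21 / R) / (1 - 21 / R) ≤ 1 + 1000 / R := by
    refine (one_add_div_one_sub_le (by positivity) hθ).trans ?_
    rw [mul_div_assoc']
    gcongr
    norm_num
  refine ⟨g, hg, fun σ ↦ ⟨(hgd σ).1, ?_, fun n ↦ ?_⟩⟩
  · exact (QRk_le_of_abs_mul_gap_sub_one_le (hd σ) (by linarith) (hgd σ).2.2).trans
      (ENNReal.ofReal_le_ofReal hQR)
  · exact quarter_le_gap (hg.1 σ) (hd σ) hθ (hRN ▸ (hgd σ).2.1) ((hgd σ).2.2 n)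

end Scheduling

section DyadicBuckets

open Finset

variable {α : Type*} {p : α → ℝ} {δ N : ℝ} {i j : ℕ} {σ : α}

/-- The letters whose weight is `δ / 2 ^ i` up to a factor `2`. Because of the truncated
subtraction, the bucket with index `i = 0` is empty. -/
def dyadicBucket (p : α → ℝ) (δ : ℝ) (i : ℕ) : Set α :=
  {σ | δ / 2 ^ i < p σ ∧ p σ ≤ δ / 2 ^ (i - 1)}

/-- The indices of the dyadic buckets with more than `N` elements. An infinite bucket does not
count, as its `ncard` is `0`. -/
def bigIndices (p : α → ℝ) (δ N : ℝ) : Set ℕ :=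
  {i | N < ((dyadicBucket p δ i).ncard : ℝ)}

/-- The letters in the dyadic buckets with more than `N` elements. -/
def bigBuckets (p : α → ℝ) (δ N : ℝ) : Set α :=
  ⋃ i ∈ bigIndices p δ N, dyadicBucket p δ i

theorem le_two_mul_of_mem_dyadicBucket (hδ : 0 < δ) (hσ : σ ∈ dyadicBucket p δ i) :
    p σ ≤ 2 * (δ / 2 ^ i) := by
  refine hσ.2.trans ?_
  rw [div_le_iff₀ (by positivity), mul_assoc, div_mul_eq_mul_div, mul_div_assoc', le_div_iff₀
    (by positivity), mul_left_comm, ← pow_succ']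
  gcongr
  · exact one_le_two
  · omega

theorem index_le_of_mem_dyadicBucket (hδ : 0 < δ) (hi : σ ∈ dyadicBucket p δ i)
    (hj : σ ∈ dyadicBucket p δ j) : j ≤ i := by
  by_contra! hij
  refine (hi.1.trans_le hj.2).not_ge ?_
  gcongr
  · exact one_le_two
  · omega

theorem mem_dyadicBucket_iff_eq (hδ : 0 < δ) (hi : σ ∈ dyadicBucket p δ i) :
    σ ∈ dyadicBucket p δ j ↔ i = j where
  mp hj := (index_le_of_mem_dyadicBucket hδ hj hi).antisymm (index_le_of_mem_dyadicBucket hδ hi hj)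
  mpr hij := hij ▸ hi

theorem exists_partition_bigBuckets (hδ : 0 < δ) (hN : 0 ≤ N) :
    ∃ (b : bigBuckets p δ N → bigIndices p δ N)
      (S : bigIndices p δ N → Finset (bigBuckets p δ N)),
      (∀ {i σ}, σ ∈ S i ↔ b σ = i) ∧
        (∀ i, ∀ σ ∈ S i, σ.1 ∈ dyadicBucket p δ i) ∧
        ∀ i, #(S i) = (dyadicBucket p δ i).ncard := by
  have hindex (σ : bigBuckets p δ N) : ∃ i : bigIndices p δ N, σ.1 ∈ dyadicBucket p δ i := by
    obtain ⟨i, hi, hσ⟩ := Set.mem_iUnion₂.mp σ.2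
    exact ⟨⟨i, hi⟩, hσ⟩
  choose b hb using hindex
  have hfinite (i : bigIndices p δ N) :
      (Subtype.val ⁻¹' dyadicBucket p δ i : Set (bigBuckets p δ N)).Finite :=
    (Set.finite_of_ncard_pos (mod_cast hN.trans_lt i.2)).preimage Subtype.val_injective.injOn
  refine ⟨b, fun i ↦ (hfinite i).toFinset, fun {i σ} ↦ ?_,
    fun i σ hσ ↦ (hfinite i).mem_toFinset.mp hσ, fun i ↦ ?_⟩
  · rw [(hfinite i).mem_toFinset, Set.mem_preimage, mem_dyadicBucket_iff_eq hδ (hb σ),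
      Subtype.ext_iff]
  · rw [← Set.ncard_eq_toFinset_card _ (hfinite i)]
    refine Set.ncard_preimage_of_injective_subset_range Subtype.val_injective ?_
    rw [Subtype.range_coe]
    exact Set.subset_biUnion_of_mem (u := fun i ↦ dyadicBucket p δ i) i.2

theorem exists_coloring_on_big_buckets_general (hδ : 0 < δ) (hN : 10 ^ 8 ≤ N)
    (hp : Summable fun τ : bigBuckets p δ N ↦ p τ) (hne : (bigBuckets p δ N).Nonempty) :
    ∃ g : bigBuckets p δ N → ℕ → ℕ, IsColoring g ∧
      ∀ σ : bigBuckets p δ N,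
        HasDensityFun (g σ) (p σ / ∑' τ : bigBuckets p δ N, p τ) ∧
        QRk 1 (g σ) ≤ ENNReal.ofReal (1 + 1000 / N ^ ((1 : ℝ) / 4)) ∧
        ∀ n : ℕ, N / 4 ≤ ((g σ (n + 1) - g σ n : ℕ) : ℝ) := by
  obtain ⟨b, S, hS, hS_bucket, hS_card⟩ :=
    exists_partition_bigBuckets (p := p) hδ (le_trans (by norm_num) hN)
  have := hne.to_subtype
  exact exists_coloring_of_comparable_weights hS hp (fun i ↦ by positivity)
    (fun i σ hσ ↦ ⟨(hS_bucket i σ hσ).1, le_two_mul_of_mem_dyadicBucket hδ (hS_bucket i σ hσ)⟩)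
    hN fun i ↦ hS_card i ▸ i.2

end DyadicBuckets

/-- **Claim.** Fix `0 < ε < 1`, `δ = ε⁶/10²⁰`, `N = 10¹⁶/ε⁴`, and a probability distribution `p`
on a countable alphabet with `p σ < δ` for all `σ`. Bucket the alphabet by
`Σ_i = {σ : δ/2^i < p σ ≤ δ/2^(i−1)}`, let `I` be the set of indices of buckets with more than `N`
characters and `Σ_I` the union of those buckets; assume `Σ_I ≠ ∅`. Then there is a coloring
`{g σ}_{σ ∈ Σ_I}` of `ℕ` such that each `g σ` has density `p σ / ∑_{τ ∈ Σ_I} p τ`,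
`QR₁(g σ) ≤ 1 + 1000/N^(1/4)`, and all gaps of `g σ` are at least `N/4`. -/
theorem exists_coloring_on_big_buckets (α : Type) [Countable α]
    (ε δ N : ℝ) (hε0 : 0 < ε) (hε1 : ε < 1)
    (hδ : δ = ε ^ 6 / 10 ^ 20) (hN : N = 10 ^ 16 / ε ^ 4)
    (p : α → ℝ) (hp0 : ∀ σ, 0 ≤ p σ) (hp1 : HasSum p 1)
    (hsmall : ∀ σ, p σ < δ)
    (Sig : ℕ → Set α)
    (hSig : ∀ i : ℕ, Sig i = {σ | δ / 2 ^ i < p σ ∧ p σ ≤ δ / 2 ^ (i - 1)})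
    (I : Set ℕ) (hI : I = {i : ℕ | N < ((Sig i).ncard : ℝ)})
    (SigI : Set α) (hSigI : SigI = ⋃ i ∈ I, Sig i)
    (hne : SigI.Nonempty) :
    ∃ g : SigI → ℕ → ℕ, IsColoring g ∧
      ∀ σ : SigI,
        HasDensityFun (g σ) (p σ / ∑' τ : SigI, p τ) ∧
        QRk 1 (g σ) ≤ ENNReal.ofReal (1 + 1000 / N ^ ((1 : ℝ) / 4)) ∧
        ∀ n : ℕ, N / 4 ≤ ((g σ (n + 1) - g σ n : ℕ) : ℝ) := by
  obtain rfl : Sig = dyadicBucket p δ := funext hSig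
  subst hI hSigI
  have hδ₀ : 0 < δ := by rw [hδ]; positivity
  have hN₈ : 10 ^ 8 ≤ N := by
    rw [hN, le_div_iff₀ (by positivity)]
    linarith [pow_le_one₀ (n := 4) hε0.le hε1.le]
  exact exists_coloring_on_big_buckets_general hδ₀ hN₈ (hp1.summable.subtype _) hne
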